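/- arXiv:2209.01669 — 2 statements merged into one kernel-verified Lean document; each statement's English description precedes it below -/
import Mathlib

section
/- Let p ∈ {3,5}, let k ≥ 2 and let 0 ≤ a, b ≤ p−1 be integers. If either (a = 1 and b + k ≡ 3 (mod p−1)) or (a = 2 and b + k ≡ 2 (mod p−1)), then for all integers n ≥ 0 one has τ(n) ≡ c_{k,a,b,n} (mod p), i.e. the n-th Fourier coefficient of Δ is congruent modulo p to the n-th Fourier coefficient of the Eisenstein series E_{k,ω_p^a,ω_p^b}. -/
noncomputable section

/-- The Ramanujan tau function `τ(n)`: the `n`-th coefficient of the `q`-expansion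
`q ∏_{m ≥ 1} (1 - q^m)²⁴` of `Δ` (the product may be truncated at `m = n` without changing
the `n`-th coefficient). -/
def ramanujanTau (n : ℕ) : ℤ :=
  (Polynomial.X * ∏ m ∈ Finset.Icc 1 n, (1 - Polynomial.X ^ m) ^ 24 : Polynomial ℤ).coeff n

/-- The `n`-th Fourier coefficient `c_{k,a,b,n} = ∑_{d ∣ n} ω_p^a(n/d) ω_p^b(d) d^{k-1}` of the
Eisenstein series `E_{k, ω_p^a, ω_p^b}`, where `ω : ℤ → ℤ_[p]` is the Teichmüller character
mod `p`.  (For `n = 0` the sum is empty, giving constant term `0`, as is the case whenever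
the first character is nontrivial.) -/
def eisCoeff (p : ℕ) [Fact p.Prime] (ω : ℤ → ℤ_[p]) (k a b : ℕ) (n : ℕ) : ℤ_[p] :=
  ∑ d ∈ n.divisors, ω ((n / d : ℕ) : ℤ) ^ a * ω (d : ℤ) ^ b * (d : ℤ_[p]) ^ (k - 1)

end

namespace TauAux

open Filter Topology

/-- Taylor series at the origin. -/
noncomputable def tay (f : ℂ → ℂ) : PowerSeries ℂ :=
  .mk fun m ↦ ((m.factorial : ℂ))⁻¹ * iteratedDeriv m f 0

lemma coeff_tay (f : ℂ → ℂ) (m : ℕ) :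
    (tay f).coeff m = ((m.factorial : ℂ))⁻¹ * iteratedDeriv m f 0 := by
  simp [tay]

lemma tay_congr {f g : ℂ → ℂ} (h : f =ᶠ[𝓝 0] g) : tay f = tay g := by
  ext m
  rw [coeff_tay, coeff_tay, h.iteratedDeriv_eq]

lemma tay_mul {f g : ℂ → ℂ} (hf : AnalyticAt ℂ f 0) (hg : AnalyticAt ℂ g 0) :
    tay (f * g) = tay f * tay g := by
  ext
  simp only [coeff_tay,
    iteratedDeriv_mul hf.contDiffAt hg.contDiffAt, Finset.mul_sum, PowerSeries.coeff_mul,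
    Finset.Nat.sum_antidiagonal_eq_sum_range_succ_mk, Nat.succ_eq_add_one]
  refine Finset.sum_congr rfl fun i hi ↦ ?_
  rw [Nat.cast_choose _ (by grind)]
  field_simp [Nat.factorial_ne_zero]

lemma tay_sub {f g : ℂ → ℂ} (hf : AnalyticAt ℂ f 0) (hg : AnalyticAt ℂ g 0) :
    tay (f - g) = tay f - tay g := by
  ext m
  simp only [coeff_tay, map_sub, iteratedDeriv_sub hf.contDiffAt hg.contDiffAt]
  ring

lemma tay_smul (c : ℂ) (f : ℂ → ℂ) : tay (c • f) = c • tay f := by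
  ext m
  simp [coeff_tay, iteratedDeriv_const_smul_field]
  ring

lemma tay_one : tay 1 = 1 := by
  ext m
  rw [coeff_tay, show (1 : ℂ → ℂ) = fun _ ↦ 1 from rfl, iteratedDeriv_const]
  rcases m with _ | m <;> simp [PowerSeries.coeff_one]

lemma tay_id : tay (fun q ↦ q) = PowerSeries.X := by
  ext m
  rw [coeff_tay, PowerSeries.coeff_X]
  rcases m with _ | _ | m
  · simp
  · simp
  · have : deriv (fun q : ℂ ↦ q) = fun _ ↦ 1 := by ext; simp
    rw [iteratedDeriv_succ', this, iteratedDeriv_const]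
    simp

lemma tay_deriv (f : ℂ → ℂ) : tay (deriv f) = PowerSeries.derivative ℂ (tay f) := by
  ext m
  rw [PowerSeries.coeff_derivative, coeff_tay, coeff_tay, iteratedDeriv_succ', Nat.factorial_succ]
  have : ((m.factorial : ℕ) : ℂ) ≠ 0 := by exact_mod_cast m.factorial_ne_zero
  have : (m : ℂ) + 1 ≠ 0 := by exact_mod_cast m.succ_ne_zero
  push_cast
  field_simp

lemma tay_pow {f : ℂ → ℂ} (hf : AnalyticAt ℂ f 0) (n : ℕ) : tay (f ^ n) = tay f ^ n := by
  induction n with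
  | zero => simp [tay_one]
  | succ n ih => rw [pow_succ, pow_succ, tay_mul (hf.pow n) hf, ih]

lemma tay_poly (P : Polynomial ℂ) : tay (fun q ↦ P.eval q) = (P : PowerSeries ℂ) := by
  induction P using Polynomial.induction_on' with
  | add p q hp hq =>
    have h : (fun x ↦ (p + q).eval x) = (fun x ↦ p.eval x) - (-1 : ℂ) • (fun x ↦ q.eval x) := by
      ext x; simp
    have hqa : AnalyticAt ℂ (fun x ↦ q.eval x) 0 := by
      exact (Polynomial.differentiable q).analyticAt 0
    have hpa : AnalyticAt ℂ (fun x ↦ p.eval x) 0 := by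
      exact (Polynomial.differentiable p).analyticAt 0
    rw [h, tay_sub hpa (hqa.const_smul), tay_smul, hp, hq]
    simp
  | monomial n a =>
    have h : (fun x ↦ (Polynomial.monomial n a).eval x) = a • ((fun q : ℂ ↦ q) ^ n) := by
      ext x; simp
    rw [h, tay_smul, tay_pow (f := fun q ↦ q) analyticAt_id, tay_id, Polynomial.coe_monomial]
    ext m
    simp [PowerSeries.coeff_monomial, PowerSeries.coeff_X_pow]

/-- The Euler product. -/
noncomputable def eul (q : ℂ) : ℂ := ∏' i : ℕ, (1 - q ^ (i + 1))

lemma eul_analytic : AnalyticAt ℂ eul 0 :=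
  ModularForm.differentiableOn_tprod_one_sub_pow.analyticAt
    (Metric.isOpen_ball.mem_nhds (Metric.mem_ball_self one_pos))

/-- Truncated Euler product. -/
noncomputable def eulP (R : Type*) [CommRing R] (s : Finset ℕ) : Polynomial R :=
  ∏ i ∈ s, (1 - Polynomial.X ^ (i + 1))

lemma eulP_stable (n : ℕ) (s : Finset ℕ) (hs : Finset.range n ⊆ s) :
    (Polynomial.X : Polynomial ℂ) ^ (n + 1) ∣ eulP ℂ s - eulP ℂ (Finset.range n) := by
  induction s using Finset.induction_on_max with
  | empty =>
    have : Finset.range n = ∅ := Finset.subset_empty.mp hs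
    simp [this]
  | insert a s ha ih =>
    have has : a ∉ s := fun h ↦ lt_irrefl _ (ha a h)
    by_cases h : a < n
    · have : insert a s = Finset.range n := by
        refine Finset.Subset.antisymm (fun x hx ↦ ?_) hs
        rcases Finset.mem_insert.mp hx with rfl | hx
        · simpa using h
        · have := ha x hx
          simp; omega
      simp [this]
    · have hs' : Finset.range n ⊆ s := fun x hx ↦ by
        rcases Finset.mem_insert.mp (hs hx) with rfl | hx'
        · simp at hx; omega
        · exact hx'
      have : eulP ℂ (insert a s) - eulP ℂ (Finset.range n) =
          (eulP ℂ s - eulP ℂ (Finset.range n)) - Polynomial.X ^ (a + 1) * eulP ℂ s := by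
        rw [eulP, Finset.prod_insert has, ← eulP]; ring
      rw [this]
      exact dvd_sub (ih hs') (Dvd.dvd.mul_right (pow_dvd_pow _ (by omega)) _)

lemma tendsto_iter (m : ℕ) : TendstoLocallyUniformlyOn
    (fun s : Finset ℕ ↦ iteratedDeriv m (fun q ↦ (eulP ℂ s).eval q)) (iteratedDeriv m eul) atTop
    (Metric.ball 0 1) := by
  induction m with
  | zero =>
    simp only [iteratedDeriv_zero]
    have := ModularForm.multipliableLocallyUniformlyOn_one_sub_pow.hasProdLocallyUniformlyOn
    rw [hasProdLocallyUniformlyOn_iff_tendstoLocallyUniformlyOn] at this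
    refine this.congr fun s q hq ↦ ?_
    simp [eulP, Polynomial.eval_prod]
  | succ m ih =>
    simp only [iteratedDeriv_succ]
    refine ih.deriv (.of_forall fun s ↦ ?_) Metric.isOpen_ball
    have : ContDiff ℂ (m+1) (fun q ↦ (eulP ℂ s).eval q) := by
      exact (Polynomial.differentiable _).contDiff
    exact (this.differentiable_iteratedDeriv m (by exact_mod_cast Nat.lt_succ_self m)).differentiableOn

lemma coeff_tay_eul (n m : ℕ) (hm : m ≤ n) :
    (tay eul).coeff m = (eulP ℂ (Finset.range n)).coeff m := by
  have h1 := ((tendsto_iter m).tendsto_at (Metric.mem_ball_self one_pos)).const_mul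
    (((m.factorial : ℂ))⁻¹)
  simp only [← coeff_tay, tay_poly] at h1
  refine tendsto_nhds_unique h1 (tendsto_const_nhds.congr' ?_)
  filter_upwards [eventually_ge_atTop (Finset.range n)] with s hs
  have := Polynomial.X_pow_dvd_iff.mp (eulP_stable n s hs) m (by omega)
  rw [Polynomial.coeff_sub, sub_eq_zero] at this
  simp [this]

lemma tay_delta_coeff (n : ℕ) :
    (tay (fun q ↦ q * ∏' i : ℕ, (1 - q ^ (i + 1)) ^ 24)).coeff n = (ramanujanTau n : ℂ) := by
  have h0 : (fun q : ℂ ↦ q * ∏' i : ℕ, (1 - q ^ (i + 1)) ^ 24) =ᶠ[𝓝 0] (fun q ↦ q) * eul ^ 24 := by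
    filter_upwards [Metric.isOpen_ball.mem_nhds (Metric.mem_ball_self one_pos)] with q hq
    simp only [Pi.mul_apply, Pi.pow_apply, eul]
    rw [(ModularForm.multipliable_one_sub_pow (by simpa using hq)).tprod_pow]
  rw [tay_congr h0, tay_mul (f := fun q ↦ q) analyticAt_id (eul_analytic.pow 24), tay_pow eul_analytic, tay_id]
  have h1 : (PowerSeries.X : PowerSeries ℂ) ^ (n + 1) ∣
      tay eul - (eulP ℂ (Finset.range n) : PowerSeries ℂ) := by
    rw [PowerSeries.X_pow_dvd_iff]
    intro m hm
    rw [map_sub, coeff_tay_eul n m (by omega), Polynomial.coeff_coe, sub_self]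
  have h2 := Dvd.dvd.mul_left (h1.trans (sub_dvd_pow_sub_pow _ _ 24)) PowerSeries.X
  have h3 := PowerSeries.X_pow_dvd_iff.mp h2 n (by omega)
  rw [mul_sub, map_sub, sub_eq_zero] at h3
  rw [h3]
  have h4 : (Polynomial.X * eulP ℂ (Finset.range n) ^ 24 : Polynomial ℂ) =
      (Polynomial.X * ∏ m ∈ Finset.Icc 1 n, (1 - Polynomial.X ^ m) ^ 24 : Polynomial ℤ).map
        (Int.castRingHom ℂ) := by
    simp only [Polynomial.map_mul, Polynomial.map_X, Polynomial.map_prod, Polynomial.map_pow,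
      Polynomial.map_sub, Polynomial.map_one, eulP, ← Finset.prod_pow]
    rw [Finset.range_eq_Ico, Finset.prod_Ico_add' (fun i ↦ ((1 - Polynomial.X ^ i) ^ 24 : Polynomial ℂ)) 0 n 1]
    rfl
  have h5 : (PowerSeries.X * (eulP ℂ (Finset.range n) : PowerSeries ℂ) ^ 24 : PowerSeries ℂ) =
      ((Polynomial.X * eulP ℂ (Finset.range n) ^ 24 : Polynomial ℂ) : PowerSeries ℂ) := by
    simp
  rw [h5, Polynomial.coeff_coe, h4, Polynomial.coeff_map, ramanujanTau]
  simp


open UpperHalfPlane ModularForm Derivative EisensteinSeries Function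
open scoped MatrixGroups Manifold ModularForm

lemma D_eq {k : ℤ} (f : ModularForm 𝒮ℒ k) (z : ℍ) :
    normalizedDerivOfComplex f z =
      Periodic.qParam 1 z * deriv (cuspFunction 1 f) (Periodic.qParam 1 z) := by
  have hz : ‖Periodic.qParam 1 z‖ < 1 := by
    simpa using Periodic.norm_qParam_lt_one one_pos z.im_pos
  have h1 : (⇑f ∘ ofComplex) =ᶠ[𝓝 (z : ℂ)] (cuspFunction 1 f) ∘ (Periodic.qParam 1) := by
    filter_upwards [isOpen_upperHalfPlaneSet.mem_nhds z.2] with w hw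
    have := SlashInvariantFormClass.eq_cuspFunction f ⟨w, hw⟩ one_mem_strictPeriods_SL one_ne_zero
    simp only [Function.comp_apply, ofComplex_apply_of_im_pos hw]
    exact this.symm
  have h2 : HasDerivAt (Periodic.qParam 1) (2 * Real.pi * Complex.I * Periodic.qParam 1 z) z := by
    have : HasDerivAt (fun w : ℂ ↦ Complex.exp (2 * Real.pi * Complex.I * w / (1 : ℝ)))
      (Complex.exp (2 * Real.pi * Complex.I * z / (1 : ℝ)) * (2 * Real.pi * Complex.I * 1 / (1 : ℝ))) z :=
      (((hasDerivAt_id (z : ℂ)).const_mul _).div_const _).cexp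
    convert! this using 1
    simp [Periodic.qParam]; ring
  have h3 := (ModularFormClass.differentiableAt_cuspFunction f one_pos
    one_mem_strictPeriods_SL hz).hasDerivAt
  rw [normalizedDerivOfComplex, h1.deriv_eq, (h3.comp _ h2).deriv]
  have := Complex.two_pi_I_ne_zero
  field_simp

/-- Local expression of the Rankin-Cohen bracket. -/
noncomputable def rcH (q : ℂ) : ℂ :=
  q * (4 * (cuspFunction 1 E₄ q * deriv (cuspFunction 1 E₆) q)
    - 6 * (cuspFunction 1 E₆ q * deriv (cuspFunction 1 E₄) q))

lemma an {k : ℤ} (f : ModularForm 𝒮ℒ k) : AnalyticAt ℂ (cuspFunction 1 f) 0 :=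
  ModularFormClass.analyticAt_cuspFunction_zero f one_pos one_mem_strictPeriods_SL

lemma rcH_analytic : AnalyticAt ℂ rcH 0 :=
  analyticAt_id.mul ((analyticAt_const.mul ((an E₄).mul (an E₆).deriv)).sub
    (analyticAt_const.mul ((an E₆).mul (an E₄).deriv)))

/-- The Rankin-Cohen bracket of `E₄` and `E₆`. -/
noncomputable def rc (z : ℍ) : ℂ :=
  4 * (E₄ z * serreDerivative ((6 : ℤ) : ℂ) E₆ z) - 6 * (E₆ z * serreDerivative ((4 : ℤ) : ℂ) E₄ z)

lemma rc_eq (z : ℍ) : rc z = rcH (Periodic.qParam 1 z) := by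
  have h (k : ℤ) (f : ModularForm 𝒮ℒ k) : cuspFunction 1 f (Periodic.qParam 1 z) = f z :=
    SlashInvariantFormClass.eq_cuspFunction f z one_mem_strictPeriods_SL one_ne_zero
  rw [rc, rcH, serreDerivative_apply, serreDerivative_apply, D_eq, D_eq, h, h]
  push_cast
  ring

lemma rc_eq' : rc = (4 : ℂ) • (⇑E₄ * serreDerivative ((6 : ℤ) : ℂ) E₆)
    - (6 : ℂ) • (⇑E₆ * serreDerivative ((4 : ℤ) : ℂ) E₄) := by
  ext z; simp [rc]

lemma rc_slash (γ : SL(2, ℤ)) : rc ∣[(12 : ℤ)] γ = rc := by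
  have inv (k : ℤ) (f : ModularForm 𝒮ℒ k) : ⇑f ∣[k] γ = f :=
    SlashInvariantFormClass.slash_action_eq f (γ : GL (Fin 2) ℝ) ⟨γ, rfl⟩
  have s6 := serreDerivative_slash_invariant (γ := γ) (ModularFormClass.holo E₆) (inv 6 E₆)
  have s4 := serreDerivative_slash_invariant (γ := γ) (ModularFormClass.holo E₄) (inv 4 E₄)
  rw [rc_eq', sub_eq_add_neg, SlashAction.add_slash, SlashAction.neg_slash, SL_smul_slash,
    SL_smul_slash, show (12 : ℤ) = 4 + (6 + 2) by norm_num, mul_slash_SL2, inv 4 E₄, s6,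
    show (4 + (6 + 2) : ℤ) = 6 + (4 + 2) by norm_num, mul_slash_SL2, inv 6 E₆, s4]

lemma rc_zero : IsZeroAtImInfty rc := by
  have h1 : Tendsto (fun z : ℍ ↦ rcH (Periodic.qParam 1 z)) atImInfty (𝓝 (rcH 0)) :=
    rcH_analytic.continuousAt.tendsto.comp (qParam_tendsto_atImInfty one_pos)
  have h0 : rcH 0 = 0 := by simp [rcH]
  rw [h0] at h1
  exact h1.congr fun z ↦ (rc_eq z).symm

lemma rc_mdiff : MDiff rc := by
  have h6 := serreDerivative_mdifferentiable ((6 : ℤ) : ℂ) (ModularFormClass.holo E₆)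
  have h4 := serreDerivative_mdifferentiable ((4 : ℤ) : ℂ) (ModularFormClass.holo E₄)
  have e6 := ModularFormClass.holo E₆
  have e4 := ModularFormClass.holo E₄
  rw [rc_eq']
  exact ((e4.mul h6).const_smul _).sub ((e6.mul h4).const_smul _)

/-- The bracket as a cusp form. -/
noncomputable def rcForm : CuspForm 𝒮ℒ 12 where
  toFun := rc
  slash_action_eq' A hA := by
    obtain ⟨A, rfl⟩ := hA
    exact rc_slash A
  holo' := rc_mdiff
  zero_at_cusps' hc := by
    rw [Subgroup.IsArithmetic.isCusp_iff_isCusp_SL2Z] at hc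
    rw [OnePoint.isZeroAt_iff_forall_SL2Z hc]
    intro γ _
    rw [rc_slash]
    exact rc_zero

lemma rc_delta : ∃ c : ℂ, rcH =ᶠ[𝓝 0]
    c • (fun q : ℂ ↦ q * ∏' i : ℕ, (1 - q ^ (i + 1)) ^ 24) := by
  obtain ⟨c, hc⟩ := CuspForm.exists_smul_discriminant_of_weight_eq_twelve rcForm
  refine ⟨c, ?_⟩
  filter_upwards [Metric.isOpen_ball.mem_nhds (Metric.mem_ball_self one_pos)] with q hq
  by_cases hq0 : q = 0
  · simp [hq0, rcH]
  · have him := Periodic.im_invQParam_pos_of_norm_lt_one one_pos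
      (by simpa [dist_zero_right] using hq) hq0
    have hqq : Periodic.qParam 1 ((⟨_, him⟩ : ℍ) : ℂ) = q :=
      Periodic.qParam_right_inv one_ne_zero hq0
    have h1 := DFunLike.congr_fun hc ⟨_, him⟩
    have h2 : c * ModularForm.discriminant ⟨_, him⟩ = rc ⟨_, him⟩ := h1
    rw [rc_eq, hqq, discriminant_eq_q_prod] at h2
    rw [← h2, hqq]
    simp [eta_q, hqq]

lemma E_sq : qExpansion 1 E₄ * qExpansion 1 E₄ = qExpansion 1 (E (by norm_num : 3 ≤ 8)) := by
  set f : ModularForm 𝒮ℒ 8 := (E₄.mul E₄) with hf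
  have hm : qExpansion 1 f = qExpansion 1 E₄ * qExpansion 1 E₄ :=
    ModularForm.qExpansion_mul one_pos one_mem_strictPeriods_SL _ _
  set g : ModularForm 𝒮ℒ 8 := E (by norm_num : 3 ≤ 8) with hg
  have hd : qExpansion 1 (f - g) = qExpansion 1 f - qExpansion 1 g :=
    ModularForm.qExpansion_sub one_pos one_mem_strictPeriods_SL f g
  have h0 : f - g = 0 := by
    apply sturm_bound_levelOne
    have : (1 : ℕ∞) ≤ (qExpansion 1 (f - g)).order := by
      refine PowerSeries.nat_le_order _ 1 fun i hi ↦ ?_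
      obtain rfl : i = 0 := by omega
      have e8 : (qExpansion 1 g).coeff 0 = 1 := E_qExpansion_coeff_zero _ ⟨4, rfl⟩
      have e4 : (qExpansion 1 E₄).coeff 0 = 1 := E_qExpansion_coeff_zero _ ⟨2, rfl⟩
      rw [hd, map_sub, hm, e8, PowerSeries.coeff_mul]
      simp [-PowerSeries.coeff_zero_eq_constantCoeff, e4]
    exact lt_of_lt_of_le (by norm_num) this
  rw [← hm, sub_eq_zero.mp h0]

/-- Generating series of divisor sums. -/
noncomputable def sg (k : ℕ) : PowerSeries ℤ := .mk fun n ↦ (ArithmeticFunction.sigma k n : ℤ)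

/-- Generating series of tau. -/
noncomputable def tauS : PowerSeries ℤ := .mk ramanujanTau

lemma E_sg {k : ℕ} (hk : 3 ≤ k) (hk2 : Even k) (β : ℤ) (hβ : -(2 * k / bernoulli k : ℂ) = β) :
    qExpansion 1 (E hk) = (1 + (β : PowerSeries ℤ) * sg (k - 1)).map (Int.castRingHom ℂ) := by
  ext m
  have : (β : PowerSeries ℤ) = PowerSeries.C β := by simp
  rw [E_qExpansion_coeff hk hk2, hβ, PowerSeries.coeff_map, map_add, this,
    PowerSeries.coeff_C_mul, sg, PowerSeries.coeff_mk, PowerSeries.coeff_one]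
  split_ifs with h
  · simp [h]
  · simp

lemma E4_sg : qExpansion 1 E₄ = (1 + 240 * sg 3).map (Int.castRingHom ℂ) := by
  have := E_sg (by norm_num : 3 ≤ 4) ⟨2, rfl⟩ 240 (by
    norm_num [show bernoulli 4 = -1 / 30 by decide +kernel])
  simpa using this
lemma E6_sg : qExpansion 1 E₆ = (1 - 504 * sg 5).map (Int.castRingHom ℂ) := by
  have := E_sg (by norm_num : 3 ≤ 6) ⟨3, rfl⟩ (-504) (by
    norm_num [show bernoulli 6 = 1 / 42 by decide +kernel])
  rw [this]; push_cast; ring_nf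
lemma E8_sg : qExpansion 1 (E (by norm_num : 3 ≤ 8)) =
    (1 + 480 * sg 7).map (Int.castRingHom ℂ) := by
  have := E_sg (by norm_num : 3 ≤ 8) ⟨4, rfl⟩ 480 (by
    norm_num [show bernoulli 8 = -1 / 30 by decide +kernel])
  simpa using this

lemma map_inj : Function.Injective (PowerSeries.map (Int.castRingHom ℂ)) := by
  intro f g h
  ext n
  have := congrArg (PowerSeries.coeff n) h
  simpa using this

lemma int_sq : (1 + 240 * sg 3) * (1 + 240 * sg 3) = 1 + 480 * sg 7 := by
  apply map_inj
  rw [map_mul, ← E4_sg, ← E8_sg, E_sq]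

lemma int_sq' : sg 7 = sg 3 + 120 * sg 3 ^ 2 := by
  have h := int_sq
  have : (480 : PowerSeries ℤ) * sg 7 = 480 * (sg 3 + 120 * sg 3 ^ 2) := by linear_combination -h
  have h480 : (480 : PowerSeries ℤ) ≠ 0 := by
    intro h0
    have := congrArg (PowerSeries.constantCoeff (R := ℤ)) h0
    rw [map_ofNat] at this
    norm_num at this
  exact mul_left_cancel₀ h480 this


local notation "dd" => PowerSeries.derivative ℤ

lemma map_d (f : PowerSeries ℤ) : PowerSeries.derivative ℂ (f.map (Int.castRingHom ℂ)) =
    (dd f).map (Int.castRingHom ℂ) := by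
  ext n
  simp [PowerSeries.coeff_derivative]

lemma tay_q {k : ℤ} (f : ModularForm 𝒮ℒ k) : tay (cuspFunction 1 f) = qExpansion 1 f := by
  ext n
  rw [coeff_tay, qExpansion_coeff]

/-- Integral bracket. -/
noncomputable def rcI : PowerSeries ℤ :=
  PowerSeries.X * (4 * ((1 + 240 * sg 3) * dd (1 - 504 * sg 5))
    - 6 * ((1 - 504 * sg 5) * dd (1 + 240 * sg 3)))

lemma tay_rcH : tay rcH = rcI.map (Int.castRingHom ℂ) := by
  have e : rcH = (fun q ↦ q) * ((4 : ℂ) • (cuspFunction 1 E₄ * deriv (cuspFunction 1 E₆))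
      - (6 : ℂ) • (cuspFunction 1 E₆ * deriv (cuspFunction 1 E₄))) := by
    ext q; simp [rcH]
  have a1 := (an E₄).mul (an E₆).deriv
  have a2 := (an E₆).mul (an E₄).deriv
  have b1 : AnalyticAt ℂ ((4 : ℂ) • (cuspFunction 1 E₄ * deriv (cuspFunction 1 E₆))) 0 :=
    a1.const_smul
  have b2 : AnalyticAt ℂ ((6 : ℂ) • (cuspFunction 1 E₆ * deriv (cuspFunction 1 E₄))) 0 :=
    a2.const_smul
  rw [e, tay_mul (f := fun q ↦ q) analyticAt_id (b1.sub b2), tay_sub b1 b2, tay_smul, tay_smul,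
    tay_mul (an E₄) (an E₆).deriv, tay_mul (an E₆) (an E₄).deriv, tay_deriv, tay_deriv, tay_id,
    tay_q, tay_q, E4_sg, E6_sg, map_d, map_d, rcI]
  generalize dd (1 + 240 * sg 3) = P'
  generalize dd (1 - 504 * sg 5) = Q'
  generalize 1 + 240 * sg 3 = P
  generalize 1 - 504 * sg 5 = Q
  rw [map_mul, map_sub, map_mul, map_mul, map_mul, map_mul, PowerSeries.map_X, map_ofNat,
    map_ofNat, Algebra.smul_def, Algebra.smul_def, map_ofNat, map_ofNat]

lemma tau_one : ramanujanTau 1 = 1 := by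
  simp [ramanujanTau, Polynomial.coeff_X_mul]
  simp [Polynomial.coeff_zero_eq_eval_zero]

lemma d_ofNat (n : ℕ) [n.AtLeastTwo] : dd (OfNat.ofNat n : PowerSeries ℤ) = 0 :=
  Derivation.map_natCast _ n

lemma h6 : dd (1 - 504 * sg 5) = -504 * dd (sg 5) := by
  rw [map_sub, Derivation.map_one_eq_zero, Derivation.leibniz, d_ofNat]
  simp

lemma h4 : dd (1 + 240 * sg 3) = 240 * dd (sg 3) := by
  rw [map_add, Derivation.map_one_eq_zero, Derivation.leibniz, d_ofNat]
  simp

lemma rcI_one : rcI.coeff 1 = -3456 := by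
  have a (k : ℕ) : PowerSeries.constantCoeff (sg k) = 0 := by
    rw [← PowerSeries.coeff_zero_eq_constantCoeff_apply]; simp [sg, -PowerSeries.coeff_zero_eq_constantCoeff]
  have b (k : ℕ) : PowerSeries.constantCoeff (dd (sg k)) = 1 := by
    rw [← PowerSeries.coeff_zero_eq_constantCoeff_apply, PowerSeries.coeff_derivative]; simp [sg]
  rw [rcI, h6, h4, show (1 : ℕ) = 0 + 1 from rfl, PowerSeries.coeff_succ_X_mul,
    PowerSeries.coeff_zero_eq_constantCoeff_apply]
  simp only [map_mul, map_add, map_sub, map_neg, map_ofNat, map_one, a, b]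
  norm_num

lemma rc_int : rcI = -3456 * tauS := by
  obtain ⟨c, hc⟩ := rc_delta
  have h := tay_congr hc
  rw [tay_smul, tay_rcH] at h
  have hn (n : ℕ) : (rcI.coeff n : ℂ) = c * ramanujanTau n := by
    have := congrArg (PowerSeries.coeff n) h
    rw [PowerSeries.coeff_smul, tay_delta_coeff] at this
    simpa using this
  have h1 := hn 1
  rw [tau_one, rcI_one] at h1
  have hc' : c = -3456 := by simpa using h1.symm
  ext n
  have h2 := hn n
  rw [hc'] at h2
  have : (-3456 : PowerSeries ℤ) = PowerSeries.C (-3456) := by simp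
  rw [this, PowerSeries.coeff_C_mul, tauS, PowerSeries.coeff_mk]
  exact_mod_cast h2

lemma key : 12 * tauS = PowerSeries.X * (7 * ((1 + 240 * sg 3) * dd (sg 5))
    + 5 * ((1 - 504 * sg 5) * dd (sg 3))) := by
  have h := rc_int
  rw [rcI, h6, h4] at h
  have h288 : (-288 : PowerSeries ℤ) ≠ 0 := by
    intro h0
    have := congrArg (PowerSeries.constantCoeff (R := ℤ)) h0
    rw [map_neg, map_ofNat] at this
    norm_num at this
  apply mul_left_cancel₀ h288
  linear_combination -h

lemma coeff_theta (f : PowerSeries ℤ) (n : ℕ) :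
    (PowerSeries.X * dd f).coeff n = n * f.coeff n := by
  cases n with
  | zero => simp
  | succ n =>
    rw [PowerSeries.coeff_succ_X_mul, PowerSeries.coeff_derivative]
    push_cast; ring

lemma coeff_num (m : ℕ) [m.AtLeastTwo] (f : PowerSeries ℤ) (n : ℕ) :
    ((OfNat.ofNat m : PowerSeries ℤ) * f).coeff n = (OfNat.ofNat m : ℤ) * f.coeff n := by
  have : (OfNat.ofNat m : PowerSeries ℤ) = PowerSeries.C (OfNat.ofNat m : ℤ) := by
    rw [map_ofNat]
  rw [this, PowerSeries.coeff_C_mul]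

lemma coeff_sg (k n : ℕ) : (sg k).coeff n = ∑ d ∈ n.divisors, (d : ℤ) ^ k := by
  simp [sg, ArithmeticFunction.sigma_apply]

lemma sum_congr_mod (M : ℕ) (P Q : ℤ → ℤ) (h : ∀ d : ℤ, (M : ℤ) ∣ P d - Q d) (n : ℕ) :
    ∃ z : ℤ, ∑ d ∈ n.divisors, P d = ∑ d ∈ n.divisors, Q d + M * z := by
  have : (M : ℤ) ∣ ∑ d ∈ n.divisors, (P d - Q d) := Finset.dvd_sum fun d _ ↦ h d
  obtain ⟨z, hz⟩ := this
  rw [Finset.sum_sub_distrib] at hz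
  exact ⟨z, by linarith⟩

lemma tau5 (n : ℕ) : ∃ z : ℤ, ramanujanTau n = n * ∑ d ∈ n.divisors, (d : ℤ) + 5 * z := by
  have h := key
  have h' : 12 * tauS = 7 * (PowerSeries.X * dd (sg 5)) + 5 * (PowerSeries.X *
      (336 * (sg 3 * dd (sg 5)) + (1 - 504 * sg 5) * dd (sg 3))) := by
    linear_combination h
  have h2 := congrArg (PowerSeries.coeff n) h'
  rw [map_add, coeff_num, coeff_num, coeff_num, coeff_theta, coeff_sg, tauS,
    PowerSeries.coeff_mk] at h2
  generalize (PowerSeries.coeff (R := ℤ) n) _ = w at h2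
  obtain ⟨v, hv⟩ := sum_congr_mod 5 (fun d ↦ d ^ 5) (fun d ↦ d) (fun d ↦ by
    rw [← ZMod.intCast_zmod_eq_zero_iff_dvd]
    push_cast
    generalize (d : ZMod 5) = x
    revert x; decide) n
  rw [hv] at h2
  push_cast at h2
  refine ⟨3 * (7 * n * v + w) + 4 * (n * ∑ d ∈ n.divisors, (d : ℤ)) - 7 * ramanujanTau n, ?_⟩
  linear_combination 3 * h2

lemma tau3 (n : ℕ) : ∃ z : ℤ, ramanujanTau n = n * ∑ d ∈ n.divisors, (d : ℤ) + 3 * z := by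
  have hz (m : ℕ) := sum_congr_mod 24 (fun d ↦ d ^ 5) (fun d ↦ d ^ 3) (fun d ↦ by
    rw [← ZMod.intCast_zmod_eq_zero_iff_dvd]
    push_cast
    generalize (d : ZMod 24) = x
    revert x; decide) m
  choose z hz using hz
  have hB : sg 5 = sg 3 + 24 * PowerSeries.mk z := by
    ext m
    rw [map_add, coeff_num, coeff_sg, coeff_sg, PowerSeries.coeff_mk]
    exact hz m
  set Z : PowerSeries ℤ := PowerSeries.mk z
  have hdB : dd (sg 5) = dd (sg 3) + 24 * dd Z := by
    rw [hB, map_add, Derivation.leibniz, d_ofNat]; simp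
  have hdC : dd (sg 7) = dd (sg 3) + 240 * (sg 3 * dd (sg 3)) := by
    rw [int_sq', map_add, Derivation.leibniz, d_ofNat, sq, Derivation.leibniz]
    simp only [smul_eq_mul]; ring
  have h' : 12 * tauS + 2 * (PowerSeries.X * dd (sg 3)) = 7 * (PowerSeries.X * dd (sg 5))
      + 7 * (PowerSeries.X * dd (sg 7)) + 36 * (PowerSeries.X *
      (1120 * (sg 3 * dd Z) - 70 * (sg 5 * dd (sg 3)))) := by
    rw [key, hdC]
    linear_combination 1680 * PowerSeries.X * sg 3 * hdB
  have h2 := congrArg (PowerSeries.coeff n) h'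
  rw [map_add, map_add, map_add, coeff_num, coeff_num, coeff_num, coeff_num, coeff_num,
    coeff_theta, coeff_theta, coeff_theta, coeff_sg, coeff_sg, coeff_sg, tauS,
    PowerSeries.coeff_mk] at h2
  generalize (PowerSeries.coeff (R := ℤ) n) _ = w at h2
  obtain ⟨v, hv⟩ := sum_congr_mod 36 (fun d ↦ 7 * d ^ 5 + 7 * d ^ 7 - 2 * d ^ 3)
    (fun d ↦ 12 * d) (fun d ↦ by
    rw [← ZMod.intCast_zmod_eq_zero_iff_dvd]
    push_cast
    generalize (d : ZMod 36) = x
    revert x; decide) n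
  rw [Finset.sum_sub_distrib, Finset.sum_add_distrib, ← Finset.mul_sum, ← Finset.mul_sum,
    ← Finset.mul_sum, ← Finset.mul_sum] at hv
  push_cast at hv
  refine ⟨n * v + w, ?_⟩
  have : (12 : ℤ) * ramanujanTau n =
      12 * (n * ∑ d ∈ n.divisors, (d : ℤ) + 3 * (n * v + w)) := by
    linear_combination h2 + n * hv
  linarith

lemma eis (p : ℕ) [Fact p.Prime] (hp : p = 3 ∨ p = 5)
    (ω : ℤ → ℤ_[p])
    (hω_cong : ∀ m : ℤ, PadicInt.toZMod (ω m) = (m : ZMod p))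
    (k a b : ℕ) (hk : 2 ≤ k)
    (hab : (a = 1 ∧ b + k ≡ 3 [MOD p - 1]) ∨ (a = 2 ∧ b + k ≡ 2 [MOD p - 1])) (n : ℕ) :
    PadicInt.toZMod (eisCoeff p ω k a b n) = n * ∑ d ∈ n.divisors, (d : ZMod p) := by
  have h1 : PadicInt.toZMod (eisCoeff p ω k a b n) =
      ∑ d ∈ n.divisors, ((n / d : ℕ) : ZMod p) ^ a * (d : ZMod p) ^ (b + k - 1) := by
    rw [eisCoeff, map_sum]
    refine Finset.sum_congr rfl fun d _ ↦ ?_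
    rw [map_mul, map_mul, map_pow, map_pow, map_pow, hω_cong, hω_cong, map_natCast, mul_assoc,
      Int.cast_natCast, Int.cast_natCast, ← pow_add, Nat.add_sub_assoc (by omega)]
  have hx (x : ZMod p) (r j : ℕ) (hr : 1 ≤ r) : x ^ (r + (p - 1) * j) = x ^ r := by
    by_cases h0 : x = 0
    · rw [h0, zero_pow (by omega), zero_pow (by omega)]
    · rw [pow_add, pow_mul, ZMod.pow_card_sub_one_eq_one h0, one_pow, mul_one]
  have hpp : 2 ≤ p - 1 := by omega
  have hnd (d : ℕ) (hd : d ∈ n.divisors) : ((n / d : ℕ) : ZMod p) * (d : ZMod p) = n := by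
    rw [← Nat.cast_mul, Nat.div_mul_cancel (Nat.dvd_of_mem_divisors hd)]
  rw [h1, Finset.mul_sum]
  rcases hab with ⟨rfl, h⟩ | ⟨rfl, h⟩
  · have : 3 ≤ b + k := by
      by_contra hlt
      have h2 : b + k = 2 := by omega
      rw [h2] at h
      rcases hp with rfl | rfl <;> revert h <;> decide
    obtain ⟨j, hj⟩ := (Nat.modEq_iff_dvd' this).mp h.symm
    refine Finset.sum_congr rfl fun d hd ↦ ?_
    rw [show b + k - 1 = 2 + (p - 1) * j by omega, hx _ _ _ (by omega), ← hnd d hd]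
    ring
  · obtain ⟨j, hj⟩ := (Nat.modEq_iff_dvd' (by omega : 2 ≤ b + k)).mp h.symm
    have e : ∑ d ∈ n.divisors, (n : ZMod p) * (d : ZMod p) =
        ∑ d ∈ n.divisors, (n : ZMod p) * ((n / d : ℕ) : ZMod p) :=
      (Nat.sum_div_divisors n fun d ↦ (n : ZMod p) * (d : ZMod p)).symm
    rw [e]
    refine Finset.sum_congr rfl fun d hd ↦ ?_
    rw [show b + k - 1 = 1 + (p - 1) * j by omega, hx _ _ _ (by omega), ← hnd d hd]
    ring

end TauAux

/-- Theorem 3.3 (first half): for `p ∈ {3, 5}`, if `a = 1` and `b + k ≡ 3 (mod p-1)`, or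
`a = 2` and `b + k ≡ 2 (mod p-1)`, then `τ(n) ≡ c_{k,a,b,n} (mod p)` for all `n ≥ 0`.
Here `ω` is the Teichmüller character mod `p`, characterized by `ω(m) ≡ m (mod p)` together
with its values being Teichmüller representatives (`ω(m)^p = ω(m)`). -/
theorem tau_congruent_eisenstein_three_five
    (p : ℕ) [Fact p.Prime] (hp : p = 3 ∨ p = 5)
    (ω : ℤ → ℤ_[p])
    (hω_cong : ∀ m : ℤ, PadicInt.toZMod (ω m) = (m : ZMod p))
    (hω_teich : ∀ m : ℤ, ω m ^ p = ω m)
    (k a b : ℕ) (hk : 2 ≤ k) (ha : a ≤ p - 1) (hb : b ≤ p - 1)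
    (hab : (a = 1 ∧ b + k ≡ 3 [MOD p - 1]) ∨ (a = 2 ∧ b + k ≡ 2 [MOD p - 1])) :
    ∀ n : ℕ, ((ramanujanTau n : ℤ) : ZMod p) = PadicInt.toZMod (eisCoeff p ω k a b n) := by
  intro n
  rw [TauAux.eis p hp ω hω_cong k a b hk hab n]
  have h : ∃ z : ℤ, ramanujanTau n = n * ∑ d ∈ n.divisors, (d : ℤ) + p * z := by
    rcases hp with rfl | rfl
    · exact TauAux.tau3 n
    · exact TauAux.tau5 n
  obtain ⟨z, hz⟩ := h
  rw [hz]
  push_cast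
  simp
end

section
/- Let p = 7, let k ≥ 2 and let 0 ≤ a, b ≤ 6 be integers. If either (a = 1 and b + k ≡ 5 (mod 6)) or (a = 4 and b + k ≡ 2 (mod 6)), then for all integers n ≥ 0 one has τ(n) ≡ c_{k,a,b,n} (mod 7), i.e. the n-th Fourier coefficient of Δ is congruent modulo 7 to the n-th Fourier coefficient of the Eisenstein series E_{k,ω_7^a,ω_7^b}. -/
instance : Fact (Nat.Prime 7) := ⟨by norm_num⟩


open UpperHalfPlane hiding I
open Filter Topology ModularForm ModularFormClass MatrixGroups EisensteinSeries Function
open scoped Manifold Derivative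

lemma tendsto_iteratedDeriv_aux {F : ℕ → ℂ → ℂ} {f : ℂ → ℂ} {U : Set ℂ} (hU : IsOpen U)
    (n : ℕ) (hf : TendstoLocallyUniformlyOn F f atTop U)
    (hF : ∀ m, DifferentiableOn ℂ (F m) U) :
    TendstoLocallyUniformlyOn (fun m ↦ iteratedDeriv n (F m)) (iteratedDeriv n f) atTop U := by
  induction n generalizing F f with
  | zero => simpa [iteratedDeriv_zero] using hf
  | succ n ih =>
    have h1 := hf.deriv (Eventually.of_forall hF) hU
    have h2 := ih h1 (fun m ↦ (hF m).deriv hU)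
    simpa [iteratedDeriv_succ', Function.comp_def] using h2

lemma iteratedDeriv_polynomial_aux (p : Polynomial ℂ) (n : ℕ) :
    iteratedDeriv n (fun z ↦ p.eval z) = fun z ↦ (Polynomial.derivative^[n] p).eval z := by
  induction n generalizing p with
  | zero => simp
  | succ n ih =>
    rw [iteratedDeriv_succ', Function.iterate_succ_apply, ← ih]
    congr 1
    ext z
    simp

/-- The truncated product. -/
noncomputable def truncProd (R : Type*) [CommRing R] (N : ℕ) : Polynomial R :=
  Polynomial.X * ∏ m ∈ Finset.Icc 1 N, (1 - Polynomial.X ^ m) ^ 24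

lemma truncProd_map {R S : Type*} [CommRing R] [CommRing S] (g : R →+* S) (N : ℕ) :
    (truncProd R N).map g = truncProd S N := by
  simp [truncProd, Polynomial.map_prod]

lemma truncProd_coeff_succ (R : Type*) [CommRing R] (n N : ℕ) (h : n ≤ N) :
    (truncProd R (N + 1)).coeff n = (truncProd R N).coeff n := by
  have h1 : truncProd R (N + 1) = truncProd R N * (1 - Polynomial.X ^ (N + 1)) ^ 24 := by
    simp only [truncProd]
    rw [Finset.prod_Icc_succ_top (by omega)]
    ring
  have h2 : (Polynomial.X ^ (N + 1) : Polynomial R) ∣ (1 - Polynomial.X ^ (N + 1)) ^ 24 - 1 := by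
    have := sub_dvd_pow_sub_pow (1 - Polynomial.X ^ (N + 1) : Polynomial R) 1 24
    rw [one_pow] at this
    refine dvd_trans ?_ this
    exact ⟨-1, by ring⟩
  have h3 : (Polynomial.X ^ (N + 1) : Polynomial R) ∣ truncProd R (N + 1) - truncProd R N := by
    rw [h1, show truncProd R N * (1 - Polynomial.X ^ (N + 1)) ^ 24 - truncProd R N
      = truncProd R N * ((1 - Polynomial.X ^ (N + 1)) ^ 24 - 1) by ring]
    exact h2.mul_left _
  have := Polynomial.X_pow_dvd_iff.mp h3 n (by omega)
  simpa [sub_eq_zero] using this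

lemma truncProd_coeff (n N : ℕ) (h : n ≤ N) :
    (truncProd ℂ N).coeff n = (ramanujanTau n : ℂ) := by
  induction N, h using Nat.le_induction with
  | base =>
    rw [← truncProd_map (Int.castRingHom ℂ), Polynomial.coeff_map]
    rfl
  | succ N hN ih => rw [truncProd_coeff_succ _ _ _ hN, ih]

lemma tendsto_truncProd : TendstoLocallyUniformlyOn (fun N z ↦ (truncProd ℂ N).eval z)
    (fun q ↦ q * ∏' i, (1 - q ^ (i + 1)) ^ 24) atTop (Metric.ball 0 1) := by
  have h0 := multipliableLocallyUniformlyOn_one_sub_pow.hasProdLocallyUniformlyOn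
  have hd : ContinuousOn (fun q : ℂ ↦ ∏' i, (1 - q ^ (i + 1))) (Metric.ball 0 1) := 
    differentiableOn_tprod_one_sub_pow.continuousOn
  have h1 : TendstoLocallyUniformlyOn (fun (N : ℕ) (z : ℂ) ↦ ∏ i ∈ Finset.range N, (1 - z ^ (i + 1)))
     (fun q : ℂ ↦ ∏' i, (1 - q ^ (i + 1))) atTop (Metric.ball 0 1) := by
    intro u hu x hx
    obtain ⟨t, ht, h⟩ := h0 u hu x hx
    exact ⟨t, ht, tendsto_finset_range.eventually h⟩
  have h2 : ∀ k : ℕ, TendstoLocallyUniformlyOn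
     (fun (N : ℕ) (z : ℂ) ↦ (∏ i ∈ Finset.range N, (1 - z ^ (i + 1))) ^ k)
     (fun q : ℂ ↦ (∏' i, (1 - q ^ (i + 1))) ^ k) atTop (Metric.ball 0 1) := by
    intro k
    induction k with
    | zero =>
      simp only [pow_zero]
      exact (tendsto_const_nhds.tendstoUniformlyOn_const _).tendstoLocallyUniformlyOn
    | succ k ih =>
      simp only [pow_succ]
      exact ih.mul₀ h1 (hd.pow k) hd
  have h3 := (show TendstoLocallyUniformlyOn (fun (_ : ℕ) (z : ℂ) ↦ z) (fun z ↦ z) atTop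
     (Metric.ball 0 1) from
     fun u hu x _ ↦ ⟨Set.univ, univ_mem, .of_forall fun _ y _ ↦ refl_mem_uniformity hu⟩).mul₀ (h2 24) continuousOn_id (hd.pow 24)
  refine (h3.congr ?_).congr_right ?_
  · intro N z hz
    simp [truncProd, Polynomial.eval_prod, Finset.prod_pow]
    left
    congr 1
    rw [Finset.range_eq_Ico, Finset.prod_Ico_add' (fun i ↦ 1 - z ^ i) 0 N 1]
    rfl
  · intro z hz
    simp [(multipliable_one_sub_pow (by simpa using hz)).tprod_pow 24]

lemma discriminant_coeff (n : ℕ) :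
    (qExpansion 1 ModularForm.discriminant).coeff n = (ramanujanTau n : ℂ) := by
  have h1 := tendsto_iteratedDeriv_aux Metric.isOpen_ball n tendsto_truncProd
    (fun m ↦ (Polynomial.differentiable _).differentiableOn)
  have h2 := h1.tendsto_at (Metric.mem_ball_self one_pos : (0:ℂ) ∈ Metric.ball (0:ℂ) 1)
  have h3 : iteratedDeriv n (cuspFunction 1 ModularForm.discriminant) 0
      = iteratedDeriv n (fun q : ℂ ↦ q * ∏' i, (1 - q ^ (i + 1)) ^ 24) 0 := by
    apply Filter.EventuallyEq.iteratedDeriv_eq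
    filter_upwards [Metric.ball_mem_nhds (0:ℂ) one_pos] with q hq
    exact discriminant_cuspFunction_eqOn hq
  rw [qExpansion_coeff, h3]
  have h4 : iteratedDeriv n (fun q : ℂ ↦ q * ∏' i, (1 - q ^ (i + 1)) ^ 24) 0
      = n.factorial * (ramanujanTau n : ℂ) := by
    refine tendsto_nhds_unique h2 ?_
    refine tendsto_const_nhds.congr' ?_
    filter_upwards [eventually_ge_atTop n] with N hN
    rw [iteratedDeriv_polynomial_aux, ← truncProd_coeff n N hN]
    simp [← Polynomial.coeff_zero_eq_eval_zero, Polynomial.coeff_iterate_derivative,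
      Nat.descFactorial_self]
  rw [h4]
  field_simp [Nat.factorial_ne_zero]

lemma D_eq_cusp {k : ℤ} (f : ModularForm 𝒮ℒ k) (z : ℍ) :
    Derivative.normalizedDerivOfComplex f z
      = Function.Periodic.qParam 1 z * deriv (cuspFunction 1 f) (Function.Periodic.qParam 1 z) := by
  have hq : ‖Function.Periodic.qParam 1 z‖ < 1 := Periodic.norm_qParam_lt_one one_pos z.im_pos
  have hd : DifferentiableAt ℂ (cuspFunction 1 f) (Function.Periodic.qParam 1 z) :=
    ModularFormClass.differentiableAt_cuspFunction f one_pos one_mem_strictPeriods_SL hq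
  have he : (f ∘ ofComplex) =ᶠ[𝓝 (z : ℂ)] fun w ↦ cuspFunction 1 f (Function.Periodic.qParam 1 w) := by
    filter_upwards [isOpen_upperHalfPlaneSet.mem_nhds z.im_pos] with w hw
    have := SlashInvariantFormClass.eq_cuspFunction f ⟨w, hw⟩ one_mem_strictPeriods_SL one_ne_zero
    simpa [ofComplex_apply_of_im_pos hw] using this.symm
  have hp : HasDerivAt (Function.Periodic.qParam 1)
      (Function.Periodic.qParam 1 z * (2 * Real.pi * Complex.I)) (z : ℂ) := by
    have h0 : HasDerivAt (fun w : ℂ ↦ 2 * Real.pi * Complex.I * w / (1 : ℝ))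
        (2 * Real.pi * Complex.I) (z : ℂ) := by
      simpa using (hasDerivAt_id (z : ℂ)).const_mul (2 * Real.pi * Complex.I)
    exact h0.cexp
  have hc := hd.hasDerivAt.comp (z : ℂ) hp
  rw [Derivative.normalizedDerivOfComplex, he.deriv_eq]
  have := hc.deriv
  simp only [Function.comp_def] at this
  rw [this]
  have : (2 * Real.pi * Complex.I : ℂ) ≠ 0 := Complex.two_pi_I_ne_zero
  field_simp

lemma D_zero {k : ℤ} (f : ModularForm 𝒮ℒ k) :
    IsZeroAtImInfty (Derivative.normalizedDerivOfComplex f) := by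
  have h := ModularFormClass.analyticAt_cuspFunction_zero f one_pos one_mem_strictPeriods_SL
  have h1 : Tendsto (fun q : ℂ ↦ q * deriv (cuspFunction 1 f) q) (𝓝 0) (𝓝 0) := by
    have := (continuousAt_id.mul h.deriv.continuousAt : ContinuousAt _ (0:ℂ))
    simpa [ContinuousAt, Pi.mul_def] using this
  have h2 := h1.comp (qParam_tendsto_atImInfty one_pos)
  exact h2.congr fun z ↦ (D_eq_cusp f z).symm

lemma D_periodic {k : ℤ} (f : ModularForm 𝒮ℒ k) :
    Periodic (Derivative.normalizedDerivOfComplex f ∘ ofComplex) (1 : ℝ) := by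
  intro w
  by_cases hw : 0 < w.im
  · have hw' : 0 < (w + (1 : ℝ)).im := by simpa using hw
    simp only [comp_apply, ofComplex_apply_of_im_pos hw, ofComplex_apply_of_im_pos hw', D_eq_cusp]
    have hper : Function.Periodic.qParam 1 (w + (1 : ℝ)) = Function.Periodic.qParam 1 w := by
      unfold Function.Periodic.qParam
      rw [← Complex.exp_periodic (2 * Real.pi * Complex.I * w / (1 : ℝ))]
      congr 1
      push_cast
      ring
    rw [hper]
  · have hw' : (w + (1 : ℝ)).im ≤ 0 := by simpa using hw
    simp only [comp_apply, ofComplex_apply_of_im_nonpos (not_lt.mp hw),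
      ofComplex_apply_of_im_nonpos hw']

lemma D_analytic {k : ℤ} (f : ModularForm 𝒮ℒ k) :
    AnalyticAt ℂ (cuspFunction 1 (Derivative.normalizedDerivOfComplex f)) 0 :=
  UpperHalfPlane.analyticAt_cuspFunction_zero one_pos (D_periodic f)
    (Derivative.normalizedDerivOfComplex_mdifferentiable (ModularFormClass.holo f))
    (D_zero f).isBoundedAtImInfty

lemma coeff_unique_aux (g : ℍ → ℂ) (c : ℕ → ℂ) (hg : AnalyticAt ℂ (cuspFunction 1 g) 0)
    (H : ∀ z : ℍ, HasSum (fun m : ℕ ↦ c m • (Function.Periodic.qParam 1 z) ^ m) (g z)) (n : ℕ) :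
    (qExpansion 1 g).coeff n = c n :=
  letI inst : FunLike (ℍ → ℂ) ℍ ℂ := { coe := fun f ↦ f, coe_injective := fun _ _ h ↦ h }
  (@UpperHalfPlane.qExpansion_coeff_unique (ℍ → ℂ) inst 1 g c one_pos hg H n).symm

lemma D_coeff {k : ℤ} (f : ModularForm 𝒮ℒ k) (n : ℕ) :
    (qExpansion 1 (Derivative.normalizedDerivOfComplex f)).coeff n
      = n * (qExpansion 1 f).coeff n := by
  suffices H : ∀ z : ℍ, HasSum (fun m : ℕ ↦ ((m : ℂ) * (qExpansion 1 f).coeff m) •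
      (Function.Periodic.qParam 1 z) ^ m) (Derivative.normalizedDerivOfComplex f z) by
    exact coeff_unique_aux _ _ (D_analytic f) H n
  intro z
  have hq : ‖Function.Periodic.qParam 1 z‖ < 1 := Periodic.norm_qParam_lt_one one_pos z.im_pos
  set q := Function.Periodic.qParam 1 z with hqdef
  have hd : DifferentiableOn ℂ (deriv (cuspFunction 1 f)) (Metric.ball 0 1) := by
    refine DifferentiableOn.deriv (fun w hw ↦ ?_) Metric.isOpen_ball
    exact (ModularFormClass.differentiableAt_cuspFunction f one_pos one_mem_strictPeriods_SL
      (by simpa using hw)).differentiableWithinAt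
  have hs := (Complex.hasSum_taylorSeries_on_ball (f := deriv (cuspFunction 1 f)) hd
    (show q ∈ Metric.ball 0 1 by simpa using hq)).mul_left q
  rw [D_eq_cusp]
  rw [← hasSum_nat_add_iff' 1]
  simp only [Finset.range_one, Finset.sum_singleton, Nat.cast_zero, zero_mul, zero_smul, sub_zero]
  refine hs.congr_fun ?_
  intro m
  simp only [qExpansion_coeff, ← iteratedDeriv_succ', Nat.factorial_succ, smul_eq_mul, sub_zero]
  have h1 : ((m : ℂ) + 1) ≠ 0 := by exact_mod_cast Nat.succ_ne_zero m
  have h2 : (m.factorial : ℂ) ≠ 0 := by exact_mod_cast Nat.factorial_ne_zero m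
  push_cast
  field_simp
  ring

/-- The Rankin–Cohen bracket of `E₄` and `E₆`. -/
noncomputable def bracketFun : ℍ → ℂ :=
  (4 : ℂ) • (⇑E₄ * Derivative.normalizedDerivOfComplex E₆)
    - (6 : ℂ) • (⇑E₆ * Derivative.normalizedDerivOfComplex E₄)

lemma slash_invariant_aux {k : ℤ} (f : ModularForm 𝒮ℒ k) (γ : SL(2, ℤ)) :
    (⇑f : ℍ → ℂ) ∣[k] γ = f :=
  SlashInvariantFormClass.slash_action_eq f _ ⟨γ, rfl⟩

lemma bracketFun_slash (γ : SL(2, ℤ)) : bracketFun ∣[(12 : ℤ)] γ = bracketFun := by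
  have h4 : MDiff (⇑E₄ : ℍ → ℂ) := ModularFormClass.holo E₄
  have h6 : MDiff (⇑E₆ : ℍ → ℂ) := ModularFormClass.holo E₆
  have s4 : (⇑E₄ : ℍ → ℂ) ∣[(4 : ℤ)] γ = E₄ := slash_invariant_aux E₄ γ
  have s6 : (⇑E₆ : ℍ → ℂ) ∣[(6 : ℤ)] γ = E₆ := slash_invariant_aux E₆ γ
  have t4 := Derivative.serreDerivative_slash_invariant h4 s4
  have t6 := Derivative.serreDerivative_slash_invariant h6 s6
  have hb : bracketFun = (4 : ℂ) • (⇑E₄ * Derivative.serreDerivative ((6 : ℤ) : ℂ) E₆)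
      - (6 : ℂ) • (⇑E₆ * Derivative.serreDerivative ((4 : ℤ) : ℂ) E₄) := by
    ext z
    simp [bracketFun]
    ring
  have m1 := ModularForm.mul_slash_SL2 4 (6 + 2) γ ⇑E₄ (Derivative.serreDerivative ((6 : ℤ) : ℂ) E₆)
  have m2 := ModularForm.mul_slash_SL2 6 (4 + 2) γ ⇑E₆ (Derivative.serreDerivative ((4 : ℤ) : ℂ) E₄)
  rw [s4, t6] at m1
  rw [s6, t4] at m2
  norm_num only at m1 m2
  rw [hb, sub_eq_add_neg, SlashAction.add_slash, SlashAction.neg_slash, ModularForm.SL_smul_slash,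
    ModularForm.SL_smul_slash]
  norm_num only at *
  rw [m1, m2]

lemma bracketFun_zero : IsZeroAtImInfty bracketFun := by
  have h4 : IsBoundedAtImInfty (⇑E₄ : ℍ → ℂ) := ModularFormClass.bdd_at_infty E₄
  have h6 : IsBoundedAtImInfty (⇑E₆ : ℍ → ℂ) := ModularFormClass.bdd_at_infty E₆
  have z1 : Tendsto (⇑E₄ * Derivative.normalizedDerivOfComplex E₆ : ℍ → ℂ) atImInfty (𝓝 0) := by
    have := (D_zero E₆).zero_mul_isBoundedUnder_le h4.isBoundedUnder_le
    simpa [mul_comm, Pi.mul_def] using this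
  have z2 : Tendsto (⇑E₆ * Derivative.normalizedDerivOfComplex E₄ : ℍ → ℂ) atImInfty (𝓝 0) := by
    have := (D_zero E₄).zero_mul_isBoundedUnder_le h6.isBoundedUnder_le
    simpa [mul_comm, Pi.mul_def] using this
  have := (z1.const_smul (4 : ℂ)).sub (z2.const_smul (6 : ℂ))
  rw [smul_zero, smul_zero, sub_zero] at this
  exact this

/-- The bracket as a cusp form of weight 12. -/
noncomputable def bracketForm : CuspForm 𝒮ℒ 12 where
  toFun := bracketFun
  slash_action_eq' A hA := by
    obtain ⟨A, rfl⟩ := hA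
    exact bracketFun_slash A
  holo' := by
    have h4 : MDiff (⇑E₄ : ℍ → ℂ) := ModularFormClass.holo E₄
    have h6 : MDiff (⇑E₆ : ℍ → ℂ) := ModularFormClass.holo E₆
    have d4 := Derivative.normalizedDerivOfComplex_mdifferentiable h4
    have d6 := Derivative.normalizedDerivOfComplex_mdifferentiable h6
    exact ((h4.mul d6).const_smul _).sub ((h6.mul d4).const_smul _)
  zero_at_cusps' hc := by
    rw [Subgroup.IsArithmetic.isCusp_iff_isCusp_SL2Z] at hc
    rw [OnePoint.isZeroAt_iff_forall_SL2Z hc]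
    intro γ _
    rw [bracketFun_slash]
    exact bracketFun_zero

/-- The operator `q d/dq`. -/
noncomputable def thetaOp {R : Type*} [CommRing R] (F : PowerSeries R) : PowerSeries R :=
  PowerSeries.mk fun n ↦ (n : R) * F.coeff n

lemma bracket_qExpansion : qExpansion 1 bracketFun =
    (4 : ℂ) • (qExpansion 1 E₄ * thetaOp (qExpansion 1 E₆))
    - (6 : ℂ) • (qExpansion 1 E₆ * thetaOp (qExpansion 1 E₄)) := by
  have a4 := ModularFormClass.analyticAt_cuspFunction_zero E₄ one_pos one_mem_strictPeriods_SL
  have a6 := ModularFormClass.analyticAt_cuspFunction_zero E₆ one_pos one_mem_strictPeriods_SL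
  have b4 := D_analytic E₄
  have b6 := D_analytic E₆
  have e4 : qExpansion 1 (Derivative.normalizedDerivOfComplex E₄) = thetaOp (qExpansion 1 E₄) := by
    ext n; rw [D_coeff, thetaOp, PowerSeries.coeff_mk]
  have e6 : qExpansion 1 (Derivative.normalizedDerivOfComplex E₆) = thetaOp (qExpansion 1 E₆) := by
    ext n; rw [D_coeff, thetaOp, PowerSeries.coeff_mk]
  have c1 : AnalyticAt ℂ (cuspFunction 1 (⇑E₄ * Derivative.normalizedDerivOfComplex E₆)) 0 := by
    rw [cuspFunction_mul a4.continuousAt b6.continuousAt]; exact a4.mul b6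
  have c2 : AnalyticAt ℂ (cuspFunction 1 (⇑E₆ * Derivative.normalizedDerivOfComplex E₄)) 0 := by
    rw [cuspFunction_mul a6.continuousAt b4.continuousAt]; exact a6.mul b4
  have d1 : AnalyticAt ℂ (cuspFunction 1
      ((4 : ℂ) • (⇑E₄ * Derivative.normalizedDerivOfComplex E₆))) 0 := by
    rw [cuspFunction_smul c1.continuousAt]; exact analyticAt_const.smul c1
  have d2 : AnalyticAt ℂ (cuspFunction 1
      ((6 : ℂ) • (⇑E₆ * Derivative.normalizedDerivOfComplex E₄))) 0 := by
    rw [cuspFunction_smul c2.continuousAt]; exact analyticAt_const.smul c2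
  rw [bracketFun, UpperHalfPlane.qExpansion_sub d1 d2, UpperHalfPlane.qExpansion_smul c1,
    UpperHalfPlane.qExpansion_smul c2, UpperHalfPlane.qExpansion_mul a4 b6,
    UpperHalfPlane.qExpansion_mul a6 b4, e4, e6]

lemma bracket_eq : (-3456 : ℂ) • qExpansion 1 ModularForm.discriminant =
    (4 : ℂ) • (qExpansion 1 E₄ * thetaOp (qExpansion 1 E₆))
    - (6 : ℂ) • (qExpansion 1 E₆ * thetaOp (qExpansion 1 E₄)) := by
  obtain ⟨c, hc⟩ := CuspForm.exists_smul_discriminant_of_weight_eq_twelve bracketForm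
  have hcΔ : (c • CuspForm.discriminant : ℍ → ℂ) = bracketFun := congrArg DFunLike.coe hc
  have hgΔ := ModularForm.qExpansion_smul one_pos one_mem_strictPeriods_SL c
      CuspForm.discriminant
  rw [hcΔ, bracket_qExpansion, CuspForm.coe_discriminant] at hgΔ
  have h1 := congrArg (PowerSeries.coeff 1) hgΔ
  have hc' : c = -3456 := by
    have e40 := EisensteinSeries.E_qExpansion_coeff_zero (k := 4) (by norm_num) ⟨2, rfl⟩
    have e60 := EisensteinSeries.E_qExpansion_coeff_zero (k := 6) (by norm_num) ⟨3, rfl⟩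
    have e41 := E₄_qExpansion_coeff_one
    have e61 := E₆_qExpansion_coeff_one
    simp [PowerSeries.coeff_mul, Finset.Nat.antidiagonal_succ, thetaOp, e40, e60, e41, e61,
      discriminant_qExpansion_coeff_one, -PowerSeries.coeff_zero_eq_constantCoeff] at h1
    rw [← h1]
    norm_num
  rw [← hc', ← hgΔ]

def sE4 : PowerSeries ℤ :=
  PowerSeries.mk fun n ↦ if n = 0 then 1 else 240 * (ArithmeticFunction.sigma 3 n : ℤ)

def sE6 : PowerSeries ℤ :=
  PowerSeries.mk fun n ↦ if n = 0 then 1 else -504 * (ArithmeticFunction.sigma 5 n : ℤ)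

lemma sE4_map : PowerSeries.map (Int.castRingHom ℂ) sE4 = qExpansion 1 E₄ := by
  ext n
  have hB : bernoulli 4 = -1/30 := by decide +kernel
  rw [EisensteinSeries.E_qExpansion_coeff (k := 4) (by norm_num) (by decide) n]
  simp only [sE4, PowerSeries.coeff_map, PowerSeries.coeff_mk, hB]
  split_ifs
  · simp
  · push_cast
    norm_num

lemma sE6_map : PowerSeries.map (Int.castRingHom ℂ) sE6 = qExpansion 1 E₆ := by
  ext n
  have hB : bernoulli 6 = 1/42 := by decide +kernel
  rw [EisensteinSeries.E_qExpansion_coeff (k := 6) (by norm_num) (by decide) n]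
  simp only [sE6, PowerSeries.coeff_map, PowerSeries.coeff_mk, hB]
  split_ifs
  · simp
  · push_cast
    norm_num

lemma tau_map : PowerSeries.map (Int.castRingHom ℂ) (PowerSeries.mk ramanujanTau)
    = qExpansion 1 ModularForm.discriminant := by
  ext n
  rw [discriminant_coeff]
  simp

lemma thetaOp_map {R S : Type*} [CommRing R] [CommRing S] (g : R →+* S) (F : PowerSeries R) :
    PowerSeries.map g (thetaOp F) = thetaOp (PowerSeries.map g F) := by
  ext n
  simp [thetaOp]

lemma int_identity : PowerSeries.C (-3456 : ℤ) * PowerSeries.mk ramanujanTau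
    = PowerSeries.C 4 * (sE4 * thetaOp sE6) - PowerSeries.C 6 * (sE6 * thetaOp sE4) := by
  apply PowerSeries.map_injective (Int.castRingHom ℂ) Int.cast_injective
  have h := bracket_eq
  rw [← sE4_map, ← sE6_map, ← tau_map, ← thetaOp_map, ← thetaOp_map] at h
  simp only [PowerSeries.smul_eq_C_mul] at h
  simp only [map_sub, map_mul, PowerSeries.map_C]
  convert h using 3 <;> norm_num

lemma tau_mod_seven (n : ℕ) :
    ((ramanujanTau n : ℤ) : ZMod 7) = n * (ArithmeticFunction.sigma 3 n : ZMod 7) := by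
  have h := congrArg (PowerSeries.map (Int.castRingHom (ZMod 7))) int_identity
  have h6 : PowerSeries.map (Int.castRingHom (ZMod 7)) sE6 = 1 := by
    ext n
    have : (504 : ZMod 7) = 0 := by decide
    simp only [sE6, PowerSeries.coeff_map, PowerSeries.coeff_mk, PowerSeries.coeff_one]
    split_ifs <;> simp [this]
  have ht : thetaOp (1 : PowerSeries (ZMod 7)) = 0 := by
    ext n
    simp only [thetaOp, PowerSeries.coeff_mk, PowerSeries.coeff_one]
    split_ifs with h0 <;> simp [h0]
  simp only [map_sub, map_mul, thetaOp_map, h6, ht, PowerSeries.map_C] at h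
  have h1 := congrArg (PowerSeries.coeff n) h
  have e1 : (Int.castRingHom (ZMod 7)) (-3456) = 2 := by decide
  have e2 : (Int.castRingHom (ZMod 7)) 6 = 6 := by decide
  simp only [mul_zero, zero_sub, one_mul, map_neg, PowerSeries.coeff_C_mul, PowerSeries.coeff_map,
    PowerSeries.coeff_mk, thetaOp, sE4, e1, e2] at h1
  have e3 : ∀ x y : ZMod 7, 2 * x = 2 * y → x = y := by decide
  apply e3
  refine Eq.trans (by simpa using h1) ?_
  rcases eq_or_ne n 0 with rfl | hn
  · simp
  · have e4 : ∀ x y : ZMod 7, -(6 * (x * (240 * y))) = 2 * (x * y) := by decide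
    simp only [hn, if_false]
    simpa using e4 _ _

lemma pow_seven_period (x : ZMod 7) (m r : ℕ) (hm : 1 ≤ m) (hr : 1 ≤ r) (h : m ≡ r [MOD 6]) :
    x ^ m = x ^ r := by
  by_cases hx : x = 0
  · subst hx
    rw [zero_pow (by omega), zero_pow (by omega)]
  · have h6 : x ^ 6 = 1 := ZMod.pow_card_sub_one_eq_one hx
    rw [← Nat.div_add_mod m 6, ← Nat.div_add_mod r 6, pow_add, pow_add, pow_mul, pow_mul, h6, h]
    simp

/-- Theorem 3.3 (second half): for `p = 7`, if `a = 1` and `b + k ≡ 5 (mod 6)`, or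
`a = 4` and `b + k ≡ 2 (mod 6)`, then `τ(n) ≡ c_{k,a,b,n} (mod 7)` for all `n ≥ 0`.
Here `ω` is the Teichmüller character mod `7`, characterized by `ω(m) ≡ m (mod 7)` together
with its values being Teichmüller representatives (`ω(m)⁷ = ω(m)`). -/
theorem tau_congruent_eisenstein_seven
    (ω : ℤ → ℤ_[7])
    (hω_cong : ∀ m : ℤ, PadicInt.toZMod (ω m) = (m : ZMod 7))
    (hω_teich : ∀ m : ℤ, ω m ^ 7 = ω m)
    (k a b : ℕ) (hk : 2 ≤ k) (ha : a ≤ 6) (hb : b ≤ 6)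
    (hab : (a = 1 ∧ b + k ≡ 5 [MOD 6]) ∨ (a = 4 ∧ b + k ≡ 2 [MOD 6])) :
    ∀ n : ℕ, ((ramanujanTau n : ℤ) : ZMod 7) = PadicInt.toZMod (eisCoeff 7 ω k a b n) := by
  intro n
  rw [tau_mod_seven, eisCoeff, map_sum]
  simp only [map_mul, map_pow, hω_cong, map_natCast, Int.cast_natCast]
  rw [ArithmeticFunction.sigma_apply]
  push_cast
  rcases hab with ⟨rfl, h⟩ | ⟨rfl, h⟩
  · rw [Finset.mul_sum]
    refine Finset.sum_congr rfl fun d hd ↦ ?_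
    have hn : ((n / d : ℕ) : ZMod 7) * (d : ZMod 7) = n := by
      rw [← Nat.cast_mul, Nat.div_mul_cancel (Nat.dvd_of_mem_divisors hd)]
    have he : (d : ZMod 7) ^ (b + (k - 1)) = (d : ZMod 7) ^ 4 :=
      pow_seven_period _ _ _ (by omega) (by omega) (by unfold Nat.ModEq at *; omega)
    rw [mul_assoc, ← pow_add, he, ← hn]
    ring
  · rw [← Nat.sum_div_divisors n (fun d ↦ (d : ZMod 7) ^ 3), Finset.mul_sum]
    refine Finset.sum_congr rfl fun d hd ↦ ?_
    have hn : ((n / d : ℕ) : ZMod 7) * (d : ZMod 7) = n := by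
      rw [← Nat.cast_mul, Nat.div_mul_cancel (Nat.dvd_of_mem_divisors hd)]
    have he : (d : ZMod 7) ^ (b + (k - 1)) = (d : ZMod 7) ^ 1 :=
      pow_seven_period _ _ _ (by omega) (by omega) (by unfold Nat.ModEq at *; omega)
    rw [mul_assoc, ← pow_add, he, ← hn]
    ring
end
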